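/- For real x, t with t ≠ 0 and real k, the principal value integral (1/π) p.v. ∫_{-∞}^{∞} e^{-i q² t + i q x} / (q - k) dq equals i · erf(ζ (x - 2kt)) · e^{-i k² t + i k x}, where ζ = e^{-i (π/4) sgn(t)} / (2√|t|) and erf is the (complex-argument) error function erf(z) = (2/√π) ∫_0^z e^{-s²} ds. -/

import Mathlib

open Filter MeasureTheory

/-- Complex error function along the straight segment from `0` to `z`:
`erf(z) = (2/√π) ∫₀^z e^{-s²} ds = (2/√π) z ∫₀¹ e^{-(sz)²} ds`. -/
noncomputable def cerf (z : ℂ) : ℂ :=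
  (2 / Real.sqrt Real.pi : ℂ) * (z * ∫ s in (0:ℝ)..1, Complex.exp (-((s : ℂ) * z) ^ 2))


theorem gtail (b : ℂ) (hb : 0 ≤ b.re) (hb0 : b ≠ 0) (M N : ℝ) (hM : 0 < M) (hMN : M ≤ N) :
    ‖∫ v in M..N, Complex.exp (-b * (v:ℂ)^2)‖ ≤ 2 / (‖b‖ * M) := by
  have hnb : 0 < ‖b‖ := norm_pos_iff.mpr hb0
  have hexp : ∀ v : ℝ, ‖Complex.exp (-b * (v:ℂ)^2)‖ ≤ 1 := by
    intro v
    rw [Complex.norm_exp]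
    apply Real.exp_le_one_iff.mpr
    have : (-b * (v:ℂ)^2).re = -(b.re * v^2) := by
      rw [← Complex.ofReal_pow, Complex.re_mul_ofReal]; simp
    rw [this]
    have := mul_nonneg hb (sq_nonneg v)
    linarith
  have hpos : ∀ v ∈ Set.uIcc M N, 0 < v := by
    intro v hv
    rw [Set.uIcc_of_le hMN] at hv
    exact hM.trans_le hv.1
  have hne : ∀ v ∈ Set.uIcc M N, (v:ℂ) ≠ 0 := fun v hv => by
    exact_mod_cast (hpos v hv).ne'
  have hd : ∀ v ∈ Set.uIcc M N, HasDerivAt (fun v : ℝ => Complex.exp (-b * (v:ℂ)^2) / (-2*b*v))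
      (Complex.exp (-b * (v:ℂ)^2) + Complex.exp (-b * (v:ℂ)^2) / (2*b*v^2)) v := by
    intro v hv
    have h0 := hne v hv
    have h1 : HasDerivAt (fun z : ℂ => Complex.exp (-b * z^2) / (-2*b*z))
       ((Complex.exp (-b * (v:ℂ)^2) * (-b * (2 * v)) * (-2*b*v) - Complex.exp (-b * (v:ℂ)^2) * (-2*b)) / (-2*b*v)^2) (v:ℂ) := by
      apply HasDerivAt.div
      · apply HasDerivAt.cexp
        simpa using ((hasDerivAt_id (v:ℂ)).pow 2).const_mul (-b)
      · have := (hasDerivAt_id (v:ℂ)).const_mul (-2*b)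
        rw [mul_one] at this
        exact this
      · simp [hb0, h0]
    convert h1.comp_ofReal using 1
    field_simp
    ring
  have hc1 : ContinuousOn (fun v : ℝ => Complex.exp (-b * (v:ℂ)^2)) (Set.uIcc M N) := by fun_prop
  have hc2 : ContinuousOn (fun v : ℝ => Complex.exp (-b * (v:ℂ)^2) / (2*b*v^2)) (Set.uIcc M N) := by
    apply ContinuousOn.div (by fun_prop) (by fun_prop)
    intro v hv
    simp [hb0, hne v hv]
  have hF := intervalIntegral.integral_eq_sub_of_hasDerivAt hd
    (hc1.add hc2).intervalIntegrable
  rw [intervalIntegral.integral_add hc1.intervalIntegrable hc2.intervalIntegrable] at hF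
  have hN : 0 < N := hM.trans_le hMN
  have hbd : ∀ v : ℝ, 0 < v → ‖Complex.exp (-b * (v:ℂ)^2) / (-2*b*v)‖ ≤ 1 / (2*‖b‖*v) := by
    intro v hv
    rw [norm_div]
    simp only [norm_mul, norm_neg, Complex.norm_real, Complex.norm_ofNat, Real.norm_of_nonneg hv.le]
    gcongr
    exact hexp v
  have hI : ‖∫ v in M..N, Complex.exp (-b * (v:ℂ)^2) / (2*b*v^2)‖ ≤ 1/(2*‖b‖) * (1/M - 1/N) := by
    have hd2 : ∀ v ∈ Set.uIcc M N, HasDerivAt (fun v : ℝ => -(1/(2*‖b‖)) * v⁻¹) (1/(2*‖b‖*v^2)) v := by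
      intro v hv
      have := (hasDerivAt_inv (hpos v hv).ne').const_mul (-(1/(2*‖b‖)))
      have e : -(1/(2*‖b‖)) * -(v^2)⁻¹ = 1/(2*‖b‖*v^2) := by
        rw [one_div, one_div, mul_inv (2*‖b‖)]
        ring
      rw [← e]
      exact this
    have hc3 : ContinuousOn (fun v : ℝ => 1/(2*‖b‖*v^2)) (Set.uIcc M N) := by
      apply ContinuousOn.div (by fun_prop) (by fun_prop)
      intro v hv
      have := hpos v hv
      positivity
    have h3 := intervalIntegral.integral_eq_sub_of_hasDerivAt hd2 hc3.intervalIntegrable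
    have h4 := intervalIntegral.norm_integral_le_of_norm_le (μ := volume) hMN
      (f := fun v : ℝ => Complex.exp (-b * (v:ℂ)^2) / (2*b*v^2)) (g := fun v : ℝ => 1/(2*‖b‖*v^2))
      (ae_of_all _ (fun v hv => by
        have hv0 : 0 < v := hM.trans hv.1
        rw [norm_div]
        simp only [norm_mul, norm_pow, Complex.norm_real, Complex.norm_ofNat, Real.norm_of_nonneg hv0.le]
        gcongr
        exact hexp v)) hc3.intervalIntegrable
    rw [h3] at h4
    refine h4.trans (le_of_eq ?_)
    field_simp
    ring
  have hEq := eq_sub_of_add_eq hF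
  rw [hEq]
  calc _ ≤ 1 / (2*‖b‖*N) + 1 / (2*‖b‖*M) + 1/(2*‖b‖) * (1/M - 1/N) :=
        (norm_sub_le _ _).trans (add_le_add ((norm_sub_le _ _).trans (add_le_add (hbd N hN) (hbd M hM))) hI)
    _ = 1 / (‖b‖ * M) := by field_simp; ring
    _ ≤ _ := by gcongr; norm_num

theorem gpos (b : ℂ) (hb : 0 < b.re) (M : ℝ) (hM : 0 < M) :
    ‖(Real.pi / b) ^ (1/2:ℂ) / 2 - ∫ v in (0:ℝ)..M, Complex.exp (-b * (v:ℂ)^2)‖ ≤ 2 / (‖b‖ * M) := by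
  have hb0 : b ≠ 0 := by rintro rfl; simp at hb
  have h1 := intervalIntegral_tendsto_integral_Ioi (μ := volume) 0
    (integrable_cexp_neg_mul_sq hb).integrableOn tendsto_id
  rw [integral_gaussian_complex_Ioi hb] at h1
  refine le_of_tendsto (h1.sub_const _).norm ?_
  filter_upwards [eventually_ge_atTop M] with N hN
  have hc : ∀ a c, IntervalIntegrable (fun v : ℝ => Complex.exp (-b * (v:ℂ)^2)) volume a c :=
    fun a c => Continuous.intervalIntegrable (by fun_prop) _ _
  rw [id, intervalIntegral.integral_interval_sub_left (hc _ _) (hc _ _)]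
  exact gtail b hb.le hb0 M N hM hN

theorem gim (t : ℝ) (ht : t ≠ 0) (M : ℝ) (hM : 0 < M) :
    ‖(Real.pi / (Complex.I * t)) ^ (1/2:ℂ) / 2 - ∫ v in (0:ℝ)..M, Complex.exp (-(Complex.I * t) * (v:ℂ)^2)‖ ≤ 2 / (|t| * M) := by
  have hcont : Continuous (fun d : ℝ => ∫ v in (0:ℝ)..M, Complex.exp (-(d + Complex.I * t) * (v:ℂ)^2)) := by
    apply intervalIntegral.continuous_parametric_intervalIntegral_of_continuous'
    fun_prop
  have hc2 : ContinuousAt (fun d : ℝ => (Real.pi / (d + Complex.I * t)) ^ (1/2:ℂ) / 2) 0 := by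
    apply ContinuousAt.div_const
    refine ContinuousAt.cpow ?_ continuousAt_const ?_
    · apply ContinuousAt.div (by fun_prop) (by fun_prop)
      simp [ht]
    · right
      simp [Complex.div_im, Complex.normSq, ht, Real.pi_ne_zero]
  have h := ((hc2.tendsto.sub (hcont.tendsto 0)).norm).mono_left (nhdsWithin_le_nhds (s := Set.Ioi 0))
  simp only [Complex.ofReal_zero, zero_add] at h
  refine le_of_tendsto h ?_
  filter_upwards [self_mem_nhdsWithin] with d hd
  refine (gpos (d + Complex.I * t) (by simpa using hd) M hM).trans ?_
  have : |t| ≤ ‖(d:ℂ) + Complex.I * t‖ := by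
    simpa using Complex.abs_im_le_norm ((d:ℂ) + Complex.I * t)
  have := abs_pos.mpr ht
  gcongr

theorem gval (t : ℝ) (ht : t ≠ 0) : (Real.pi / (Complex.I * t)) ^ (1/2:ℂ) =
    (Real.sqrt Real.pi / Real.sqrt |t|) * Complex.exp (-(Complex.I * (Real.pi / 4) * Real.sign t)) := by
  have hp := Real.pi_pos
  have hr : 0 < Real.pi / |t| := div_pos hp (abs_pos.mpr ht)
  have key : ∀ s : ℝ, (s = 1 ∨ s = -1) → t = s * |t| → (Real.pi / (Complex.I * t) : ℂ) = ((Real.pi / |t| : ℝ) : ℂ) *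
     Complex.exp (-(Complex.I * (Real.pi / 2) * s)) := by
    intro s hs h
    have h2 : ((|t|:ℝ):ℂ) ≠ 0 := by exact_mod_cast (abs_pos.mpr ht).ne'
    conv_lhs => rw [h]
    rcases hs with rfl | rfl
    · have : Complex.exp (-(Complex.I * (Real.pi / 2) * (1:ℝ))) = -Complex.I := by
        rw [← Complex.exp_neg_pi_div_two_mul_I]; congr 1; push_cast; ring
      rw [this]; push_cast; field_simp; simp
    · have : Complex.exp (-(Complex.I * (Real.pi / 2) * (-1:ℝ))) = Complex.I := by
        refine Eq.trans ?_ Complex.exp_pi_div_two_mul_I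
        congr 1; push_cast; ring
      rw [this]; push_cast; field_simp; simp
  have hs : (Real.sign t = 1 ∨ Real.sign t = -1) := by
    rcases lt_or_gt_of_ne ht with h | h
    · right; exact Real.sign_of_neg h
    · left; exact Real.sign_of_pos h
  have h2 : t = Real.sign t * |t| := by
    rcases lt_or_gt_of_ne ht with h | h
    · rw [Real.sign_of_neg h, abs_of_neg h]; ring
    · rw [Real.sign_of_pos h, abs_of_pos h]; ring
  rw [key _ hs h2]
  have hne : ((Real.pi / |t| : ℝ) : ℂ) * Complex.exp (-(Complex.I * (Real.pi / 2) * Real.sign t)) ≠ 0 :=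
    mul_ne_zero (by exact_mod_cast hr.ne') (Complex.exp_ne_zero _)
  rw [Complex.cpow_def_of_ne_zero hne, Complex.log_ofReal_mul hr (Complex.exp_ne_zero _), Complex.log_exp, add_mul, Complex.exp_add]
  · congr 1
    · rw [← Complex.ofReal_div, ← Real.sqrt_div hp.le, Real.sqrt_eq_rpow, Real.rpow_def_of_pos hr]
      push_cast; rfl
    · congr 1; ring
  · rcases hs with h | h <;> rw [h] <;> simp <;> linarith
  · rcases hs with h | h <;> rw [h] <;> simp <;> linarith

/-- Fresnel-type primitive. -/
noncomputable def fres (t x : ℝ) : ℂ := ∫ v in (0:ℝ)..x, Complex.exp (-(Complex.I * t) * (v:ℂ)^2)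

theorem fres_cont (t : ℝ) : Continuous (fres t) := by
  apply intervalIntegral.continuous_primitive
  intro a b
  exact Continuous.intervalIntegrable (by fun_prop) _ _

theorem fres_neg (t x : ℝ) : fres t (-x) = - fres t x := by
  unfold fres
  have := intervalIntegral.integral_comp_neg (a := 0) (b := x) (fun v : ℝ => Complex.exp (-(Complex.I * t) * (v:ℂ)^2))
  simp only [neg_zero, Complex.ofReal_neg, neg_sq] at this
  rw [this, intervalIntegral.integral_symm]

theorem fres_norm (t v : ℝ) : ‖Complex.exp (-(Complex.I * t) * (v:ℂ)^2)‖ ≤ 1 := by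
  rw [Complex.norm_exp]
  have : (-(Complex.I * t) * (v:ℂ)^2) = ((-t * v^2 : ℝ) : ℂ) * Complex.I := by push_cast; ring
  rw [this, Complex.re_ofReal_mul]
  simp

theorem fres_lim (t : ℝ) (ht : t ≠ 0) : Tendsto (fres t) atTop
    (nhds ((Real.pi / (Complex.I * t)) ^ (1/2:ℂ) / 2)) := by
  rw [tendsto_iff_norm_sub_tendsto_zero]
  have h0 : Tendsto (fun M : ℝ => 2 / (|t| * M)) atTop (nhds 0) :=
    (tendsto_id.const_mul_atTop (abs_pos.mpr ht)).const_div_atTop 2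
  refine squeeze_zero' (Eventually.of_forall fun _ => norm_nonneg _) ?_ h0
  filter_upwards [eventually_gt_atTop 0] with M hM
  rw [norm_sub_rev]
  exact gim t ht M hM

theorem fres_bdd (t : ℝ) (ht : t ≠ 0) : ∃ C, ∀ x, ‖fres t x‖ ≤ C := by
  set L := (Real.pi / (Complex.I * t)) ^ (1/2:ℂ) / 2 with hL
  have hpos : ∀ x, 0 ≤ x → ‖fres t x‖ ≤ 1 + (‖L‖ + 2 / |t|) := by
    intro x hx
    have : 0 ≤ ‖L‖ + 2 / |t| := by positivity
    rcases le_total x 1 with h | h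
    · have h1 := intervalIntegral.norm_integral_le_of_norm_le_const (a := 0) (b := x)
        (f := fun v : ℝ => Complex.exp (-(Complex.I * t) * (v:ℂ)^2)) (C := 1) (fun v _ => fres_norm t v)
      rw [sub_zero, abs_of_nonneg hx] at h1
      change ‖fres t x‖ ≤ _ at h1
      linarith
    · have h1 := gim t ht x (by linarith)
      have h2 : 2 / (|t| * x) ≤ 2 / |t| := by
        have := abs_pos.mpr ht
        apply div_le_div_of_nonneg_left (by norm_num) this
        nlinarith
      have h3 : ‖fres t x‖ ≤ ‖L‖ + ‖L - fres t x‖ := by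
        rw [norm_sub_rev, add_comm]
        simpa using norm_add_le (fres t x - L) L
      change ‖L - fres t x‖ ≤ _ at h1
      linarith
  refine ⟨1 + (‖L‖ + 2 / |t|), fun x => ?_⟩
  rcases le_total 0 x with h | h
  · exact hpos x h
  · have := hpos (-x) (by linarith)
    rwa [fres_neg, norm_neg] at this

theorem set_split (k e N : ℝ) (f : ℝ → ℂ) (he : 0 < e) (heN : e ≤ N)
    (hf : ContinuousOn f {k}ᶜ) :
    ∫ q in {q : ℝ | e ≤ |q - k| ∧ |q - k| ≤ N}, f q = ∫ u in e..N, (f (k + u) + f (k - u)) := by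
  have hset : {q : ℝ | e ≤ |q - k| ∧ |q - k| ≤ N} = Set.Icc (k - N) (k - e) ∪ Set.Icc (k + e) (k + N) := by
    ext q
    simp only [Set.mem_ofPred_eq, Set.mem_union, Set.mem_Icc]
    rcases le_total 0 (q - k) with h | h
    · rw [abs_of_nonneg h]
      constructor
      · rintro ⟨h1, h2⟩; right; constructor <;> linarith
      · rintro (⟨h1, h2⟩ | ⟨h1, h2⟩) <;> constructor <;> linarith
    · rw [abs_of_nonpos h]
      constructor
      · rintro ⟨h1, h2⟩; left; constructor <;> linarith
      · rintro (⟨h1, h2⟩ | ⟨h1, h2⟩) <;> constructor <;> linarith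
  have c1 : ContinuousOn f (Set.Icc (k - N) (k - e)) := hf.mono (by
    intro q hq h; have : q = k := h; have := hq.2; linarith)
  have c2 : ContinuousOn f (Set.Icc (k + e) (k + N)) := hf.mono (by
    intro q hq h; have : q = k := h; have := hq.1; linarith)
  rw [hset, setIntegral_union _ measurableSet_Icc c1.integrableOn_Icc c2.integrableOn_Icc,
    integral_Icc_eq_integral_Ioc, integral_Icc_eq_integral_Ioc,
    ← intervalIntegral.integral_of_le (by linarith), ← intervalIntegral.integral_of_le (by linarith),
    intervalIntegral.integral_add, intervalIntegral.integral_comp_add_left f k,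
    intervalIntegral.integral_comp_sub_left f k, add_comm]
  · apply ContinuousOn.intervalIntegrable
    rw [Set.uIcc_of_le heN]
    apply hf.comp (by fun_prop)
    intro u hu h; have : k + u = k := h; have := hu.1; linarith
  · apply ContinuousOn.intervalIntegrable
    rw [Set.uIcc_of_le heN]
    apply hf.comp (by fun_prop)
    intro u hu h; have : k - u = k := h; have := hu.1; linarith
  · rw [Set.disjoint_left]
    intro q h1 h2
    have := h1.2; have := h2.1; linarith

theorem sin_rep (y u : ℝ) (hu : u ≠ 0) :
    (Complex.exp (Complex.I * u * y) - Complex.exp (-(Complex.I * u * y))) / u =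
    Complex.I * y * ∫ s in (0:ℝ)..1, (Complex.exp (Complex.I * u * y * s) + Complex.exp (-(Complex.I * u * y * s))) := by
  rcases eq_or_ne y 0 with rfl | hy
  · simp
  have hu' : (u:ℂ) ≠ 0 := by exact_mod_cast hu
  have hy' : (y:ℂ) ≠ 0 := by exact_mod_cast hy
  have hc : Complex.I * u * y ≠ 0 := by simp [hu, hy]
  have h1 := integral_exp_mul_complex (a := 0) (b := 1) hc
  have h2 := integral_exp_mul_complex (a := 0) (b := 1) (neg_ne_zero.mpr hc)
  simp only [neg_mul] at h2
  rw [intervalIntegral.integral_add, h1, h2]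
  · simp only [Complex.ofReal_one, Complex.ofReal_zero, mul_zero, mul_one, neg_zero, Complex.exp_zero]
    field_simp
    ring
  · exact Continuous.intervalIntegrable (by fun_prop) _ _
  · exact Continuous.intervalIntegrable (by fun_prop) _ _

theorem inner_int (t w e N : ℝ) (ht : t ≠ 0) :
    ∫ u in e..N, Complex.exp (-(Complex.I * t) * (u:ℂ)^2) *
      (Complex.exp (Complex.I * u * w) + Complex.exp (-(Complex.I * u * w))) =
    Complex.exp (Complex.I * t * ((w / (2 * t) : ℝ) : ℂ)^2) *
      (fres t (N - w / (2 * t)) - fres t (e - w / (2 * t)) + (fres t (N + w / (2 * t)) - fres t (e + w / (2 * t)))) := by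
  have hw : w = 2 * t * (w / (2 * t)) := by field_simp
  generalize w / (2 * t) = a at hw
  subst hw
  have hc : ∀ a c, IntervalIntegrable (fun v : ℝ => Complex.exp (-(Complex.I * t) * (v:ℂ)^2)) volume a c :=
    fun a c => Continuous.intervalIntegrable (by fun_prop) _ _
  have hs : ∀ p q, fres t p - fres t q = ∫ v in q..p, Complex.exp (-(Complex.I * t) * (v:ℂ)^2) := by
    intro p q
    exact intervalIntegral.integral_interval_sub_left (hc _ _) (hc _ _)
  rw [hs, hs, ← intervalIntegral.integral_comp_sub_right (fun v : ℝ => Complex.exp (-(Complex.I * t) * (v:ℂ)^2)) a,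
    ← intervalIntegral.integral_comp_add_right (fun v : ℝ => Complex.exp (-(Complex.I * t) * (v:ℂ)^2)) a,
    ← intervalIntegral.integral_add, ← intervalIntegral.integral_const_mul]
  · congr 1
    ext u
    rw [mul_add, mul_add, ← Complex.exp_add, ← Complex.exp_add, ← Complex.exp_add, ← Complex.exp_add]
    congr 2 <;> push_cast <;> ring
  · exact Continuous.intervalIntegrable (by fun_prop) _ _
  · exact Continuous.intervalIntegrable (by fun_prop) _ _

theorem ii_swap (f : ℝ → ℝ → ℂ) (hf : Continuous (Function.uncurry f)) (a b c d : ℝ) :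
    ∫ x in a..b, ∫ y in c..d, f x y = ∫ y in c..d, ∫ x in a..b, f x y := by
  apply intervalIntegral_intervalIntegral_swap
  refine (hf.continuousOn.integrableOn_compact ((isCompact_uIcc (a := a) (b := b)).prod (isCompact_uIcc (a := c) (b := d)))).mono_set ?_
  exact Set.prod_mono Set.uIoc_subset_uIcc Set.uIoc_subset_uIcc

theorem pv_eq (x t k e N : ℝ) (ht : t ≠ 0) (he : 0 < e) (heN : e ≤ N) :
    ∫ q in {q : ℝ | e ≤ |q - k| ∧ |q - k| ≤ N},
      Complex.exp (-(Complex.I * q ^ 2 * t) + Complex.I * q * x) / (q - k) =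
    Complex.exp (-(Complex.I * k ^ 2 * t) + Complex.I * k * x) * (Complex.I * ((x - 2 * k * t : ℝ) : ℂ) *
      ∫ s in (0:ℝ)..1, Complex.exp (Complex.I * t * (((x - 2 * k * t) * s / (2 * t) : ℝ) : ℂ)^2) *
      (fres t (N - (x - 2 * k * t) * s / (2 * t)) - fres t (e - (x - 2 * k * t) * s / (2 * t)) +
       (fres t (N + (x - 2 * k * t) * s / (2 * t)) - fres t (e + (x - 2 * k * t) * s / (2 * t))))) := by
  rw [set_split k e N (fun q : ℝ => Complex.exp (-(Complex.I * q ^ 2 * t) + Complex.I * q * x) / (q - k)) he heN]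
  · simp_rw [← inner_int t _ e N ht]
    rw [← ii_swap (fun u s : ℝ => Complex.exp (-(Complex.I * t) * (u:ℂ)^2) *
      (Complex.exp (Complex.I * u * ((x - 2 * k * t) * s : ℝ)) + Complex.exp (-(Complex.I * u * ((x - 2 * k * t) * s : ℝ))))) (by
        unfold Function.uncurry; fun_prop),
      ← intervalIntegral.integral_const_mul, ← intervalIntegral.integral_const_mul]
    apply intervalIntegral.integral_congr
    intro u hu
    rw [Set.uIcc_of_le heN] at hu
    have hu0 : u ≠ 0 := (he.trans_le hu.1).ne'
    have hu' : (u:ℂ) ≠ 0 := by exact_mod_cast hu0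
    have h := sin_rep (x - 2 * k * t) u hu0
    simp only [intervalIntegral.integral_const_mul]
    have h2 : ∀ z w : ℂ, Complex.I * ((x - 2 * k * t : ℝ) : ℂ) * (z * w) = z * (Complex.I * ((x - 2 * k * t : ℝ) : ℂ) * w) := by
      intros; ring
    rw [h2]
    have h3 : ∀ s : ℝ, Complex.I * u * (((x - 2 * k * t) * s : ℝ) : ℂ) = Complex.I * u * ((x - 2 * k * t : ℝ) : ℂ) * s := by
      intro s; push_cast; ring
    simp_rw [h3]
    rw [← h, mul_div_assoc', mul_div_assoc', mul_sub, mul_sub, ← Complex.exp_add, ← Complex.exp_add, ← Complex.exp_add, ← Complex.exp_add]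
    have e1 : (((k + u : ℝ) : ℂ) - k) = u := by push_cast; ring
    have e2 : (((k - u : ℝ) : ℂ) - k) = -u := by push_cast; ring
    simp only [e1, e2]
    rw [div_neg, ← sub_eq_add_neg, ← sub_div]
    congr 3 <;> push_cast <;> ring
  · apply ContinuousOn.div (by fun_prop) (by fun_prop)
    intro q hq h
    apply hq
    have : (q:ℂ) = k := sub_eq_zero.mp h
    exact_mod_cast this

theorem zeta_sq (t : ℝ) (ht : t ≠ 0) :
    (Complex.exp (-(Complex.I * (Real.pi / 4) * Real.sign t)) / (2 * Real.sqrt |t|))^2 = -(Complex.I / (4 * t)) := by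
  have hsq : ((Real.sqrt |t| : ℝ) : ℂ)^2 = ((|t| : ℝ) : ℂ) := by
    rw [← Complex.ofReal_pow, Real.sq_sqrt (abs_nonneg t)]
  have ht' : (t:ℂ) ≠ 0 := by exact_mod_cast ht
  rw [div_pow, mul_pow, hsq, ← Complex.exp_nat_mul]
  rcases lt_or_gt_of_ne ht with h | h
  · rw [Real.sign_of_neg h, abs_of_neg h]
    have : Complex.exp ((2:ℕ) * -(Complex.I * (Real.pi / 4) * (-1:ℝ))) = Complex.I := by
      refine Eq.trans ?_ Complex.exp_pi_div_two_mul_I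
      congr 1; push_cast; ring
    rw [this]; push_cast; field_simp; norm_num
  · rw [Real.sign_of_pos h, abs_of_pos h]
    have : Complex.exp ((2:ℕ) * -(Complex.I * (Real.pi / 4) * (1:ℝ))) = -Complex.I := by
      refine Eq.trans ?_ Complex.exp_neg_pi_div_two_mul_I
      congr 1; push_cast; ring
    rw [this]; push_cast; field_simp; norm_num

theorem lim_int (t y : ℝ) (ht : t ≠ 0) :
    Tendsto (fun n : ℕ => ∫ s in (0:ℝ)..1, Complex.exp (Complex.I * t * ((y * s / (2 * t) : ℝ) : ℂ)^2) *
      (fres t (n - y * s / (2 * t)) - fres t (1 / (n + 1 : ℝ) - y * s / (2 * t)) +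
       (fres t (n + y * s / (2 * t)) - fres t (1 / (n + 1 : ℝ) + y * s / (2 * t))))) atTop
    (nhds (∫ s in (0:ℝ)..1, Complex.exp (Complex.I * t * ((y * s / (2 * t) : ℝ) : ℂ)^2) *
      (Real.pi / (Complex.I * t)) ^ (1/2:ℂ))) := by
  obtain ⟨C, hC⟩ := fres_bdd t ht
  have hfc := fres_cont t
  apply intervalIntegral.tendsto_integral_filter_of_dominated_convergence (fun _ => C + C + (C + C))
  · refine Eventually.of_forall fun n => ?_
    apply Continuous.aestronglyMeasurable
    fun_prop
  · refine Eventually.of_forall fun n => ae_of_all _ fun s _ => ?_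
    rw [norm_mul]
    have h1 : ‖Complex.exp (Complex.I * t * ((y * s / (2 * t) : ℝ) : ℂ)^2)‖ ≤ 1 := by
      have := fres_norm (-t) (y * s / (2 * t))
      simpa using this
    have hn : ∀ a b, ‖fres t a - fres t b‖ ≤ C + C := fun a b =>
      (norm_sub_le _ _).trans (add_le_add (hC a) (hC b))
    have h2 := (norm_add_le _ _).trans (add_le_add (hn (n - y * s / (2 * t)) (1 / (n + 1 : ℝ) - y * s / (2 * t)))
      (hn (n + y * s / (2 * t)) (1 / (n + 1 : ℝ) + y * s / (2 * t))))
    calc _ ≤ 1 * (C + C + (C + C)) := by gcongr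
      _ = _ := one_mul _
  · exact intervalIntegrable_const
  · refine ae_of_all _ fun s _ => Tendsto.const_mul _ ?_
    generalize y * s / (2 * t) = a
    have hL := fres_lim t ht
    have e0 : Tendsto (fun n : ℕ => 1 / (n + 1 : ℝ)) atTop (nhds 0) := tendsto_one_div_add_atTop_nhds_zero_nat
    have hn : Tendsto (fun n : ℕ => (n:ℝ)) atTop atTop := tendsto_natCast_atTop_atTop
    have l1 := hL.comp (tendsto_atTop_add_const_right _ (-a) hn)
    have l2 := hL.comp (tendsto_atTop_add_const_right _ a hn)
    have l3 := (hfc.tendsto _).comp (e0.add_const (-a))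
    have l4 := (hfc.tendsto _).comp (e0.add_const a)
    have := (l1.sub l3).add (l2.sub l4)
    simp only [← sub_eq_add_neg] at this
    refine this.trans (le_of_eq ?_)
    congr 1
    rw [zero_sub, zero_add, fres_neg]
    ring

/-- `(1/π) p.v. ∫ e^{-iq²t + iqx}/(q-k) dq = i erf(ζ(x - 2kt)) e^{-ik²t + ikx}`
with `ζ = e^{-i(π/4) sgn t}/(2√|t|)`, for real `x, k` and `t ≠ 0`; the principal
value is the symmetric limit cutting out `|q-k| < 1/(n+1)` and `|q-k| > n`. -/
theorem pv_chirped_gaussian_hilbert (x t k : ℝ) (ht : t ≠ 0) :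
    Tendsto
      (fun n : ℕ =>
        (1 / Real.pi : ℂ) *
          ∫ q in {q : ℝ | 1 / (n + 1 : ℝ) ≤ |q - k| ∧ |q - k| ≤ n},
            Complex.exp (-(Complex.I * q ^ 2 * t) + Complex.I * q * x) / (q - k))
      atTop
      (nhds (Complex.I *
          cerf ((Complex.exp (-(Complex.I * (Real.pi / 4) * Real.sign t))
                  / (2 * Real.sqrt |t|)) * ((x : ℂ) - 2 * k * t)) *
          Complex.exp (-(Complex.I * k ^ 2 * t) + Complex.I * k * x))) := by
  have h := (((lim_int t (x - 2 * k * t) ht).const_mul (Complex.I * ((x - 2 * k * t : ℝ) : ℂ))).const_mul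
    (Complex.exp (-(Complex.I * k ^ 2 * t) + Complex.I * k * x))).const_mul (1 / Real.pi : ℂ)
  refine (h.congr' ?_).trans (le_of_eq ?_)
  · filter_upwards [eventually_ge_atTop 1] with n hn
    have hn' : (1:ℝ) ≤ n := by exact_mod_cast hn
    have he : 1 / (n + 1 : ℝ) ≤ n := by
      refine le_trans ?_ hn'
      rw [div_le_one (by positivity)]
      linarith
    rw [pv_eq x t k (1 / (n + 1 : ℝ)) n ht (by positivity) he]
  · congr 1
    rw [intervalIntegral.integral_mul_const, gval t ht]
    unfold cerf
    have hz := zeta_sq t ht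
    have ht' : (t:ℂ) ≠ 0 := by exact_mod_cast ht
    have hE : ∀ s : ℝ, -((s:ℂ) * ((Complex.exp (-(Complex.I * (Real.pi / 4) * Real.sign t))
                  / (2 * Real.sqrt |t|)) * ((x : ℂ) - 2 * k * t)))^2 =
        Complex.I * t * (((x - 2 * k * t) * s / (2 * t) : ℝ) : ℂ)^2 := by
      intro s
      rw [mul_pow, mul_pow, hz]
      push_cast
      field_simp
      ring
    simp_rw [hE]
    generalize (∫ s in (0:ℝ)..1, Complex.exp (Complex.I * t * (((x - 2 * k * t) * s / (2 * t) : ℝ) : ℂ)^2)) = J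
    have hp : ((Real.sqrt Real.pi : ℝ) : ℂ)^2 = (Real.pi : ℂ) := by
      rw [← Complex.ofReal_pow, Real.sq_sqrt Real.pi_pos.le]
    have hp0 : ((Real.sqrt Real.pi : ℝ) : ℂ) ≠ 0 := by
      exact_mod_cast (Real.sqrt_pos.mpr Real.pi_pos).ne'
    have ht0 : ((Real.sqrt |t| : ℝ) : ℂ) ≠ 0 := by
      exact_mod_cast (Real.sqrt_pos.mpr (abs_pos.mpr ht)).ne'
    generalize Complex.exp (-(Complex.I * (Real.pi / 4) * Real.sign t)) = Z
    generalize Complex.exp (-(Complex.I * k ^ 2 * t) + Complex.I * k * x) = A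
    rw [← hp]
    push_cast
    field_simp
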